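/- Let d ≥ 2 and a > 2b > 0, and let y ∈ S₀. Then the solution v_y of the linearized equation satisfies v_y(r) → −∞ and v_y'(r) → −∞ as r → ∞, and the divergence is exponentially fast: there exist constants c > 0 and ε > 0 such that v_y(r) ≤ −c·e^{εr} and v_y'(r) ≤ −c·e^{εr} for all sufficiently large r. -/

import Mathlib

open Real Filter

noncomputable section

/-- The nonlinearity `F(x) = (a/2)·sin(2x)·(sin²x − b/a)`. -/
def Fnl (a b x : ℝ) : ℝ := (a / 2) * Real.sin (2 * x) * (Real.sin x ^ 2 - b / a)

/-- `u` solves the radial ODE `u'' + ((d−1)/r)u' + F(u) = 0` on `(0,∞)` with `u'(0) = 0`. -/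
def IsRadialSol (d : ℕ) (a b : ℝ) (u : ℝ → ℝ) : Prop :=
  ContDiff ℝ 2 u ∧ deriv u 0 = 0 ∧
  ∀ r : ℝ, 0 < r →
    deriv (deriv u) r + (((d : ℝ) - 1) / r) * deriv u r + Fnl a b (u r) = 0

/-- `u` is the family of solutions of the radial ODE with `u y 0 = y`, `(u y)'(0) = 0`. -/
def IsShootingFamily (d : ℕ) (a b : ℝ) (u : ℝ → ℝ → ℝ) : Prop :=
  ∀ y ∈ Set.Ioo (0 : ℝ) (Real.pi / 2), IsRadialSol d a b (u y) ∧ u y 0 = y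

/-- `S₊`: initial data whose solution stays bounded away from zero. -/
def Splus (u : ℝ → ℝ → ℝ) : Set ℝ :=
  {y | y ∈ Set.Ioo (0 : ℝ) (Real.pi / 2) ∧ ∃ ε > (0 : ℝ), ∀ r : ℝ, 0 ≤ r → ε ≤ u y r}

/-- `S₀`: initial data whose solution is positive and tends to zero at infinity. -/
def Szero (u : ℝ → ℝ → ℝ) : Set ℝ :=
  {y | y ∈ Set.Ioo (0 : ℝ) (Real.pi / 2) ∧ (∀ r : ℝ, 0 ≤ r → 0 < u y r) ∧
    Tendsto (u y) atTop (nhds 0)}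

/-- `S₋`: initial data whose solution vanishes at some positive radius. -/
def Sminus (u : ℝ → ℝ → ℝ) : Set ℝ :=
  {y | y ∈ Set.Ioo (0 : ℝ) (Real.pi / 2) ∧ ∃ r > (0 : ℝ), u y r = 0}

/-- `v` solves the linearized equation `v'' + ((d−1)/r)v' + F'(w)v = 0`
with `v(0) = 1`, `v'(0) = 0`. -/
def IsLinearizedSol (d : ℕ) (a b : ℝ) (w v : ℝ → ℝ) : Prop :=
  ContDiff ℝ 2 v ∧ v 0 = 1 ∧ deriv v 0 = 0 ∧
  ∀ r : ℝ, 0 < r →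
    deriv (deriv v) r + (((d : ℝ) - 1) / r) * deriv v r
      + deriv (Fnl a b) (w r) * v r = 0

/-! Write `w_l = r u' + l u` for the generator of the dilations of the ground state `u`. Both `u'`
and `w_l` satisfy the linearized equation up to an explicit source, so that the Wronskians of `v`
with them have derivatives of known sign wherever `v` has one.

The Wronskian with `u'` shows that `v` has a first zero `r₀`, with `v'(r₀) < 0`. Choosing the
exponent `l = -r₀ u'(r₀) / u(r₀)` makes `w_l` vanish at `r₀`, so Rolle's theorem for its Wronskian
with `v` produces a zero of the source `l u F'(u) - (l + 2) F(u)` in `(0, r₀)`; since `u` decreases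
and the growth index `x F'(x) / F(x)` is decreasing where `F > 0`, the source is positive beyond
`r₀`. By Pohozaev's identity `-r u' / u` is monotone, so `w_l ≤ 0` beyond `r₀`, and comparing signs
in the Wronskian excludes a second zero of `v` and an eventually nondecreasing `v`. Once `u` is so
small that `F'(u) ≤ -κ < 0`, the equation turns a negative, decreasing `v` into one decreasing
exponentially.
-/

open Set Topology Asymptotics

section Calculus

theorem exists_first_zero {f : ℝ → ℝ} {a t : ℝ} (hf : Continuous f)
    (ha : ∀ᶠ x in 𝓝[>] a, f x < 0) (hat : a < t) (ht : 0 ≤ f t) :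
    ∃ c ∈ Ioc a t, f c = 0 ∧ ∀ x ∈ Ioo a c, f x < 0 := by
  obtain ⟨m, ham : a < m, hm⟩ := mem_nhdsGT_iff_exists_Ioo_subset.1 ha
  have hmt : m ≤ t := le_of_not_gt fun htm => (hm ⟨hat, htm⟩).not_ge ht
  have hK : IsCompact (Icc m t ∩ {x | 0 ≤ f x}) :=
    isCompact_Icc.inter_right (isClosed_le continuous_const hf)
  obtain ⟨c, ⟨⟨hmc, hct⟩, hfc⟩, hleast⟩ := hK.exists_isLeast ⟨t, ⟨hmt, le_rfl⟩, ht⟩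
  have hac : a < c := ham.trans_le hmc
  have hneg : ∀ x ∈ Ioo a c, f x < 0 := fun x hx => by
    rcases lt_or_ge x m with hxm | hmx
    · exact hm ⟨hx.1, hxm⟩
    · exact lt_of_not_ge fun h => hx.2.not_ge (hleast ⟨⟨hmx, hx.2.le.trans hct⟩, h⟩)
  have hclosure : closure (Ioo a c) ⊆ {x | f x ≤ 0} :=
    closure_minimal (fun x hx => (hneg x hx).le) (isClosed_le hf continuous_const)
  rw [closure_Ioo hac.ne] at hclosure
  exact ⟨c, ⟨hac, hct⟩, le_antisymm (hclosure (right_mem_Icc.2 hac.le)) hfc, hneg⟩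

theorem eventually_nhdsGT_neg_of_deriv_neg {f : ℝ → ℝ} {a : ℝ} (hfa : f a = 0)
    (hf' : deriv f a < 0) : ∀ᶠ x in 𝓝[>] a, f x < 0 := by
  filter_upwards [nhdsWithin_le_nhds (eventually_nhdsWithin_sign_eq_of_deriv_neg hf' hfa),
    self_mem_nhdsWithin] with x hsign hx
  rwa [sign_neg (sub_neg.2 hx), sign_eq_neg_one_iff] at hsign

theorem deriv_nonneg_of_neg_left {f : ℝ → ℝ} {a c : ℝ} (hac : a < c)
    (hneg : ∀ x ∈ Ioo a c, f x < 0) (hfc : f c = 0) : 0 ≤ deriv f c := by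
  by_contra! hf'
  have hpos : ∀ᶠ x in 𝓝[<] c, 0 < f x := by
    filter_upwards [nhdsWithin_le_nhds (eventually_nhdsWithin_sign_eq_of_deriv_neg hf' hfc),
      self_mem_nhdsWithin] with x hsign hx
    rwa [sign_pos (sub_pos.2 hx), sign_eq_one_iff] at hsign
  obtain ⟨x, hxpos, hx⟩ := (hpos.and (Ioo_mem_nhdsLT hac)).exists
  exact lt_asymm hxpos (hneg x hx)

theorem le_mul_exp_of_deriv_le {f : ℝ → ℝ} {K R : ℝ} (hf : Differentiable ℝ f)
    (hK : ∀ x ≥ R, deriv f x ≤ K * f x) {r : ℝ} (hr : R ≤ r) :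
    f r ≤ f R * Real.exp (K * (r - R)) := by
  rw [← gronwallBound_ε0]
  refine le_gronwallBound_of_liminf_deriv_right_le hf.continuous.continuousOn
    (fun x _ s hs => ?_) le_rfl (fun x hx => by simpa using hK x hx.1) r ⟨hr, le_rfl⟩
  exact (hf x).hasDerivAt.hasDerivWithinAt.liminf_right_slope_le hs

theorem tendsto_pow_mul_of_isBigO_exp_neg {f : ℝ → ℝ} {k : ℝ} (hk : 0 < k)
    (hf : f =O[atTop] fun r => Real.exp (-k * r)) (m : ℕ) :
    Tendsto (fun r => r ^ m * f r) atTop (𝓝 0) := by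
  have hsmall := (isLittleO_pow_exp_pos_mul_atTop m hk).mul_isBigO hf
  refine (isLittleO_one_iff ℝ).1 (hsmall.congr_right fun r => ?_)
  rw [← Real.exp_add, neg_mul, add_neg_cancel, Real.exp_zero]

theorem deriv_le_neg_sqrt_mul {f : ℝ → ℝ} {κ R : ℝ} (hf : ContDiff ℝ 2 f) (hκ : 0 ≤ κ)
    (hf' : ∀ r ≥ R, deriv f r ≤ 0) (hf'' : ∀ r ≥ R, κ * f r ≤ deriv (deriv f) r)
    (hlim : Tendsto f atTop (𝓝 0)) {r : ℝ} (hr : R ≤ r) : deriv f r ≤ -√κ * f r := by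
  have hderiv : ∀ s, HasDerivAt (fun s => deriv f s ^ 2 - κ * f s ^ 2)
      (2 * deriv f s * (deriv (deriv f) s - κ * f s)) s := fun s =>
    (((hf.differentiable_deriv_two s).hasDerivAt.pow 2).sub
      (((hf.differentiable two_ne_zero s).hasDerivAt.pow 2).const_mul κ)).congr_deriv (by ring)
  have hanti : AntitoneOn (fun s => deriv f s ^ 2 - κ * f s ^ 2) (Ici R) := by
    refine antitoneOn_of_hasDerivWithinAt_nonpos (convex_Ici R)
      (fun s _ => (hderiv s).continuousAt.continuousWithinAt)
      (fun s _ => (hderiv s).hasDerivWithinAt) fun s hs => ?_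
    have hRs := interior_subset hs
    exact mul_nonpos_of_nonpos_of_nonneg (mul_nonpos_of_nonneg_of_nonpos zero_le_two (hf' s hRs))
      (sub_nonneg.2 (hf'' s hRs))
  have hnonneg : 0 ≤ deriv f r ^ 2 - κ * f r ^ 2 := by
    have hlim' : Tendsto (fun s => -(κ * f s ^ 2)) atTop (𝓝 0) := by
      simpa using ((hlim.pow 2).const_mul κ).neg
    refine le_of_tendsto hlim' ?_
    filter_upwards [eventually_ge_atTop r] with s hs
    linarith [hanti hr (hr.trans hs) hs, sq_nonneg (deriv f s)]
  have hsq : (√κ * f r) ^ 2 ≤ (-deriv f r) ^ 2 := by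
    rw [mul_pow, Real.sq_sqrt hκ, neg_sq]
    linarith
  linarith [(abs_le_of_sq_le_sq' hsq (neg_nonneg.2 (hf' r hr))).2]

theorem isBigO_exp_neg_sqrt {f : ℝ → ℝ} {κ : ℝ} (hf : ContDiff ℝ 2 f) (hκ : 0 ≤ κ)
    (hf₀ : ∀ᶠ r in atTop, 0 ≤ f r) (hf' : ∀ᶠ r in atTop, deriv f r ≤ 0)
    (hf'' : ∀ᶠ r in atTop, κ * f r ≤ deriv (deriv f) r) (hlim : Tendsto f atTop (𝓝 0)) :
    f =O[atTop] fun r => Real.exp (-√κ * r) := by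
  obtain ⟨R, hR⟩ := eventually_atTop.1 (hf'.and hf'')
  refine IsBigO.of_bound (f R * Real.exp (√κ * R)) ?_
  filter_upwards [hf₀, eventually_ge_atTop R] with r hfr hr
  rw [Real.norm_of_nonneg hfr, Real.norm_of_nonneg (Real.exp_pos _).le, mul_assoc, ← Real.exp_add]
  convert le_mul_exp_of_deriv_le (hf.differentiable two_ne_zero) (fun s hs =>
    deriv_le_neg_sqrt_mul hf hκ (fun r hr => (hR r hr).1) (fun r hr => (hR r hr).2) hlim hs) hr
    using 3
  ring

theorem isBigO_deriv_exp_neg {f : ℝ → ℝ} {k : ℝ} (hf : ContDiff ℝ 2 f)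
    (hf₀ : ∀ᶠ r in atTop, 0 ≤ f r) (hf' : ∀ᶠ r in atTop, deriv f r ≤ 0)
    (hf'' : ∀ᶠ r in atTop, 0 ≤ deriv (deriv f) r) (hO : f =O[atTop] fun r => Real.exp (-k * r)) :
    deriv f =O[atTop] fun r => Real.exp (-k * r) := by
  have hshift : (fun r => f (r - 1)) =O[atTop] fun r => Real.exp (-k * r) := by
    refine (hO.comp_tendsto (tendsto_atTop_add_const_right atTop (-1) tendsto_id)).trans
      (IsBigO.of_bound (Real.exp k) (Eventually.of_forall fun r => le_of_eq ?_))
    simp only [Function.comp_apply, id, Real.norm_eq_abs, Real.abs_exp, ← Real.exp_add]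
    ring_nf
  refine IsBigO.trans (IsBigO.of_bound 1 ?_) hshift
  obtain ⟨R, hR⟩ := eventually_atTop.1 (hf₀.and (hf'.and hf''))
  have hmono : MonotoneOn (deriv f) (Ici R) :=
    monotoneOn_of_deriv_nonneg (convex_Ici R) hf.differentiable_deriv_two.continuous.continuousOn
      hf.differentiable_deriv_two.differentiableOn fun s hs => (hR s (interior_subset hs)).2.2
  filter_upwards [eventually_ge_atTop (R + 1)] with r hr
  have hr' : R ≤ r - 1 := by linarith
  have hrR : R ≤ r := by linarith
  have hmvt := (convex_Icc (r - 1) r).image_sub_le_mul_sub_of_deriv_le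
    hf.continuous.continuousOn (hf.differentiable two_ne_zero).differentiableOn
    (fun s hs => hmono (hr'.trans (interior_subset hs).1) hrR (interior_subset hs).2)
    (r - 1) (left_mem_Icc.2 (by linarith)) r (right_mem_Icc.2 (by linarith)) (by linarith)
  rw [Real.norm_of_nonpos (hR r hrR).2.1, Real.norm_of_nonneg (hR _ hr').1]
  linarith [(hR r hrR).1]

end Calculus

section RadialOperator

/-- The radial Laplacian `f'' + ((n+1)/r) f'` in dimension `n + 2`; the shift in the dimension keeps
all the powers of `r` below natural. -/
def radialLaplacian (n : ℕ) (f : ℝ → ℝ) (r : ℝ) : ℝ :=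
  deriv (deriv f) r + ((n : ℝ) + 1) / r * deriv f r

/-- The Wronskian `r ^ (n+1) (f' g - f g')` weighted so that its derivative only involves radial
Laplacians in dimension `n + 2`. -/
def radialWronskian (n : ℕ) (f g : ℝ → ℝ) (r : ℝ) : ℝ :=
  r ^ (n + 1) * (deriv f r * g r - f r * deriv g r)

variable {n : ℕ} {f g : ℝ → ℝ} {r : ℝ}

theorem hasDerivAt_pow_mul_deriv (hf : DifferentiableAt ℝ (deriv f) r) (hr : r ≠ 0) :
    HasDerivAt (fun s => s ^ (n + 1) * deriv f s) (r ^ (n + 1) * radialLaplacian n f r) r := by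
  refine ((hasDerivAt_pow (n + 1) r).mul hf.hasDerivAt).congr_deriv ?_
  rw [radialLaplacian]
  push_cast
  field_simp
  ring

theorem deriv_neg_of_radialLaplacian_neg (hf : ContDiff ℝ 2 f) (hr : 0 < r)
    (hneg : ∀ s ∈ Ioo 0 r, radialLaplacian n f s < 0) : deriv f r < 0 := by
  have hcont : Continuous (deriv f) := hf.continuous_deriv one_le_two
  have hanti : StrictAntiOn (fun s => s ^ (n + 1) * deriv f s) (Icc 0 r) := by
    refine strictAntiOn_of_hasDerivWithinAt_neg (convex_Icc 0 r) (by fun_prop) (fun s hs =>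
      (hasDerivAt_pow_mul_deriv (hf.differentiable_deriv_two s) ?_).hasDerivWithinAt)
      fun s hs => ?_ <;> rw [interior_Icc] at hs
    · exact hs.1.ne'
    · exact mul_neg_of_pos_of_neg (pow_pos hs.1 _) (hneg s hs)
  have := hanti (left_mem_Icc.2 hr.le) (right_mem_Icc.2 hr.le) hr
  simp only [zero_pow n.succ_ne_zero, zero_mul] at this
  exact neg_of_mul_neg_right this (pow_pos hr _).le

theorem hasDerivAt_radialWronskian (hf : DifferentiableAt ℝ f r)
    (hf' : DifferentiableAt ℝ (deriv f) r) (hg : DifferentiableAt ℝ g r)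
    (hg' : DifferentiableAt ℝ (deriv g) r) (hr : r ≠ 0) :
    HasDerivAt (radialWronskian n f g)
      (r ^ (n + 1) * (radialLaplacian n f r * g r - f r * radialLaplacian n g r)) r := by
  have hsplit : radialWronskian n f g =
      fun s => s ^ (n + 1) * deriv f s * g s - f s * (s ^ (n + 1) * deriv g s) := by
    funext s
    rw [radialWronskian]
    ring
  rw [hsplit]
  refine (((hasDerivAt_pow_mul_deriv hf' hr).mul hg.hasDerivAt).sub
    (hf.hasDerivAt.mul (hasDerivAt_pow_mul_deriv hg' hr))).congr_deriv ?_
  ring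

theorem continuous_radialWronskian (hf : ContDiff ℝ 1 f) (hg : ContDiff ℝ 1 g) :
    Continuous (radialWronskian n f g) := by
  have hf₀ := hf.continuous
  have hg₀ := hg.continuous
  unfold radialWronskian
  fun_prop

theorem radialWronskian_apply_zero : radialWronskian n f g 0 = 0 := by
  simp [radialWronskian]

end RadialOperator

section ExponentialGrowth

variable {n : ℕ} {v : ℝ → ℝ} {κ R r : ℝ}

theorem deriv_neg_of_radialLaplacian_nonpos (hv : ContDiff ℝ 2 v) (hR : 0 < R)
    (hΔ : ∀ r ≥ R, radialLaplacian n v r ≤ 0) (hvR : deriv v R < 0) (hr : R ≤ r) :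
    deriv v r < 0 := by
  have hderiv : ∀ s ≥ R, HasDerivAt (fun s => s ^ (n + 1) * deriv v s) _ s := fun s hs =>
    hasDerivAt_pow_mul_deriv (hv.differentiable_deriv_two s) (hR.trans_le hs).ne'
  have hanti : AntitoneOn (fun s => s ^ (n + 1) * deriv v s) (Ici R) :=
    antitoneOn_of_hasDerivWithinAt_nonpos (convex_Ici R)
      (fun s hs => (hderiv s hs).continuousAt.continuousWithinAt)
      (fun s hs => (hderiv s (interior_subset hs)).hasDerivWithinAt) fun s hs =>
        mul_nonpos_of_nonneg_of_nonpos (pow_pos (hR.trans_le (interior_subset hs)) _).le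
          (hΔ s (interior_subset hs))
  refine neg_of_mul_neg_right ?_ (pow_pos (hR.trans_le hr) (n + 1)).le
  exact (hanti self_mem_Ici hr hr).trans_lt (mul_neg_of_pos_of_neg (pow_pos hR _) hvR)

-- On `[R, ∞)` the damping `(n+1)/r` is at most `δ = (n+1)/R`, so once `ε (δ + ε) ≤ κ` the defect
-- `v' - ε v` satisfies a linear differential inequality that preserves its sign.
theorem exists_deriv_le_mul (hv : ContDiff ℝ 2 v) (hκ : 0 < κ) (hR : 0 < R)
    (hΔ : ∀ r ≥ R, radialLaplacian n v r ≤ κ * v r) (hneg : ∀ r ≥ R, v r < 0)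
    (hvR : deriv v R < 0) : ∃ ε > 0, ε ≤ 1 ∧ ∀ r ≥ R, deriv v r ≤ ε * v r := by
  have hv' : ∀ r ≥ R, deriv v r < 0 := fun r hr => deriv_neg_of_radialLaplacian_nonpos hv hR
    (fun s hs => (hΔ s hs).trans (mul_neg_of_pos_of_neg hκ (hneg s hs)).le) hvR hr
  set δ := ((n : ℝ) + 1) / R with hδ
  have hδ₁ : 0 < δ + 1 := by positivity
  set ε := min 1 (min (κ / (δ + 1)) (deriv v R / v R))
  have hε₀ : 0 < ε :=
    lt_min one_pos (lt_min (div_pos hκ hδ₁) (div_pos_of_neg_of_neg hvR (hneg R le_rfl)))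
  have hε₁ : ε ≤ 1 := min_le_left _ _
  have hεκ : ε * (δ + ε) ≤ κ :=
    calc ε * (δ + ε) ≤ ε * (δ + 1) := by gcongr
      _ ≤ κ := (le_div_iff₀ hδ₁).1 ((min_le_right _ _).trans (min_le_left _ _))
  have hεR : deriv v R ≤ ε * v R :=
    (le_div_iff_of_neg (hneg R le_rfl)).1 ((min_le_right _ _).trans (min_le_right _ _))
  have hderiv : ∀ r, HasDerivAt (fun r => deriv v r - ε * v r)
      (deriv (deriv v) r - ε * deriv v r) r := fun r =>
    (hv.differentiable_deriv_two r).hasDerivAt.sub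
      ((hv.differentiable two_ne_zero r).hasDerivAt.const_mul ε)
  refine ⟨ε, hε₀, hε₁, fun r hr => sub_nonpos.1 ?_⟩
  refine (le_mul_exp_of_deriv_le (K := -(δ + ε)) (fun r => (hderiv r).differentiableAt)
    (fun r hr => ?_) hr).trans
      (mul_nonpos_of_nonpos_of_nonneg (sub_nonpos.2 hεR) (Real.exp_pos _).le)
  have hdamp : δ * deriv v r ≤ (n + 1) / r * deriv v r :=
    mul_le_mul_of_nonpos_right (by rw [hδ]; gcongr) (hv' r hr).le
  have hΔr := hΔ r hr
  rw [radialLaplacian] at hΔr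
  rw [(hderiv r).deriv]
  linarith [mul_le_mul_of_nonpos_right hεκ (hneg r hr).le]

theorem exists_le_neg_mul_exp (hv : ContDiff ℝ 2 v) (hκ : 0 < κ) (hR : 0 < R)
    (hΔ : ∀ r ≥ R, radialLaplacian n v r ≤ κ * v r) (hneg : ∀ r ≥ R, v r < 0)
    (hvR : deriv v R < 0) : ∃ c > 0, ∃ ε > 0, ∀ r ≥ R,
      v r ≤ -c * Real.exp (ε * r) ∧ deriv v r ≤ -c * Real.exp (ε * r) := by
  obtain ⟨ε, hε, hε₁, hv'⟩ := exists_deriv_le_mul hv hκ hR hΔ hneg hvR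
  set C := -v R * Real.exp (-(ε * R)) with hC
  have hC₀ : 0 < C := mul_pos (neg_pos.2 (hneg R le_rfl)) (Real.exp_pos _)
  refine ⟨ε * C, mul_pos hε hC₀, ε, hε, fun r hr => ?_⟩
  have hexp : v r ≤ -C * Real.exp (ε * r) := by
    refine (le_mul_exp_of_deriv_le (hv.differentiable two_ne_zero) hv' hr).trans_eq ?_
    rw [hC, mul_sub, sub_eq_neg_add, Real.exp_add]
    ring
  refine ⟨hexp.trans ?_, ?_⟩
  · gcongr
    exact mul_le_of_le_one_left hC₀.le hε₁
  · linarith [hv' r hr, mul_le_mul_of_nonneg_left hexp hε.le]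

end ExponentialGrowth

section Potential

/-- The primitive of `F` vanishing at `0`. -/
def potential (F : ℝ → ℝ) (x : ℝ) : ℝ := ∫ t in (0 : ℝ)..x, F t

variable {F : ℝ → ℝ}

theorem potential_zero : potential F 0 = 0 := intervalIntegral.integral_same

theorem hasDerivAt_potential (hF : Continuous F) (x : ℝ) : HasDerivAt (potential F) (F x) x :=
  (hF.integral_hasStrictDerivAt 0 x).hasDerivAt

theorem continuous_potential (hF : Continuous F) : Continuous (potential F) :=
  continuous_iff_continuousAt.2 fun x => (hasDerivAt_potential hF x).continuousAt

/-- The integrand of Pohozaev's identity in dimension `n + 2`. -/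
def pohozaevDensity (n : ℕ) (F : ℝ → ℝ) (x : ℝ) : ℝ :=
  ((n : ℝ) + 2) * potential F x - n / 2 * (x * F x)

end Potential

/-- The structural class of scalar field nonlinearities: `F` vanishes at `0` and at `θ`, is negative
and strictly superlinear between them, is positive on `(θ, M)`, and its growth index `x F' / F` is
strictly decreasing there. -/
structure IsScalarFieldNonlinearity (F : ℝ → ℝ) (θ M : ℝ) : Prop where
  contDiff : ContDiff ℝ 1 F
  map_zero : F 0 = 0
  deriv_zero_neg : deriv F 0 < 0
  map_theta : F θ = 0
  neg : ∀ x ∈ Ioo 0 θ, F x < 0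
  lt_mul_deriv : ∀ x ∈ Ioc 0 θ, F x < x * deriv F x
  pos : ∀ x ∈ Ioo θ M, 0 < F x
  strictAntiOn_index : StrictAntiOn (fun x => x * deriv F x / F x) (Ioo θ M)

namespace IsScalarFieldNonlinearity

variable {F : ℝ → ℝ} {θ M : ℝ}

theorem nonpos (hF : IsScalarFieldNonlinearity F θ M) {x : ℝ} (hx : x ∈ Ioc 0 θ) : F x ≤ 0 := by
  rcases hx.2.eq_or_lt with rfl | hxθ
  · exact hF.map_theta.le
  · exact (hF.neg x ⟨hx.1, hxθ⟩).le

theorem lt_of_potential_nonneg (hF : IsScalarFieldNonlinearity F θ M) {x : ℝ} (hx : 0 < x)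
    (hGx : 0 ≤ potential F x) : θ < x := by
  by_contra! hxθ
  have hanti : StrictAntiOn (potential F) (Icc 0 x) :=
    strictAntiOn_of_deriv_neg (convex_Icc 0 x)
      (continuous_potential hF.contDiff.continuous).continuousOn fun z hz => by
        rw [interior_Icc] at hz
        rw [(hasDerivAt_potential hF.contDiff.continuous z).deriv]
        exact hF.neg z ⟨hz.1, hz.2.trans_le hxθ⟩
  have := hanti (left_mem_Icc.2 hx.le) (right_mem_Icc.2 hx.le) hx
  rw [potential_zero] at this
  exact this.not_ge hGx

-- Below `θ` this is superlinearity; above `θ` it says that the growth index exceeds `γ / α`.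
theorem mul_deriv_sub_mul_pos_of_lt (hF : IsScalarFieldNonlinearity F θ M) {α γ x x' : ℝ}
    (hα : 0 ≤ α) (hαγ : α ≤ γ) (hγ : 0 < γ) (hx' : 0 < x') (hlt : x' < x) (hxM : x < M)
    (hx : 0 ≤ α * (x * deriv F x) - γ * F x) :
    0 < α * (x' * deriv F x') - γ * F x' := by
  rcases le_or_gt x θ with hxθ | hθx
  · have hneg := hF.neg x' ⟨hx', hlt.trans_le hxθ⟩
    have hsuper := sub_pos.2 (hF.lt_mul_deriv x' ⟨hx', (hlt.trans_le hxθ).le⟩)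
    rcases hαγ.eq_or_lt with rfl | hαγ
    · linarith [mul_pos hγ hsuper]
    · linarith [mul_nonneg hα hsuper.le, mul_pos_of_neg_of_neg hneg (sub_neg.2 hαγ)]
  have hFx := hF.pos x ⟨hθx, hxM⟩
  have hαpos : 0 < α := hα.lt_of_ne' fun h => by
    rw [h, zero_mul, zero_sub, neg_nonneg] at hx
    exact (mul_pos hγ hFx).not_ge hx
  rcases le_or_gt x' θ with hx'θ | hθx'
  · have hneg := hF.nonpos ⟨hx', hx'θ⟩
    have hsuper := sub_pos.2 (hF.lt_mul_deriv x' ⟨hx', hx'θ⟩)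
    linarith [mul_pos hαpos hsuper, mul_nonneg_of_nonpos_of_nonpos hneg (sub_nonpos.2 hαγ)]
  · have hFx' := hF.pos x' ⟨hθx', hlt.trans hxM⟩
    have hindex : x * deriv F x / F x < x' * deriv F x' / F x' :=
      hF.strictAntiOn_index ⟨hθx', hlt.trans hxM⟩ ⟨hθx, hxM⟩ hlt
    have hratio : γ / α ≤ x * deriv F x / F x := by
      rw [div_le_div_iff₀ hαpos hFx]
      linarith
    have := hratio.trans_lt hindex
    rw [div_lt_div_iff₀ hαpos hFx'] at this
    linarith

theorem pos_of_mul_deriv_sub_neg (hF : IsScalarFieldNonlinearity F θ M) {x : ℝ} (hx : x ∈ Ioo 0 M)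
    (h : x * deriv F x - F x < 0) : 0 < F x := by
  have hθx : θ < x := lt_of_not_ge fun hxθ =>
    lt_asymm (hF.lt_mul_deriv x ⟨hx.1, hxθ⟩) (sub_neg.1 h)
  exact hF.pos x ⟨hθx, hx.2⟩

theorem hasDerivAt (hF : IsScalarFieldNonlinearity F θ M) (x : ℝ) : HasDerivAt F (deriv F x) x :=
  (hF.contDiff.differentiable one_ne_zero x).hasDerivAt

theorem two_mul_potential_le (hF : IsScalarFieldNonlinearity F θ M) {x : ℝ} (hx : x ∈ Ioo 0 M)
    (h : 0 ≤ x * deriv F x - F x) : 2 * potential F x ≤ x * F x := by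
  have hcont := hF.contDiff.continuous
  have hcontG := continuous_potential hcont
  have hderiv : ∀ z, HasDerivAt (fun z => z * F z - 2 * potential F z) (z * deriv F z - F z) z :=
    fun z => (((hasDerivAt_id z).mul (hF.hasDerivAt z)).sub
      ((hasDerivAt_potential hcont z).const_mul 2)).congr_deriv (by simp only [id]; ring)
  have hmono : MonotoneOn (fun z => z * F z - 2 * potential F z) (Icc 0 x) :=
    monotoneOn_of_hasDerivWithinAt_nonneg (convex_Icc 0 x) (by fun_prop)
      (fun z _ => (hderiv z).hasDerivWithinAt) fun z hz => by
        rw [interior_Icc] at hz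
        have := hF.mul_deriv_sub_mul_pos_of_lt (α := 1) (γ := 1) zero_le_one le_rfl one_pos hz.1
          hz.2 hx.2 (by linarith)
        linarith
  have := hmono (left_mem_Icc.2 hx.1.le) (right_mem_Icc.2 hx.1.le) hx.1.le
  simp only [zero_mul, potential_zero, mul_zero, sub_zero] at this
  linarith

theorem exists_le_neg_mul (hF : IsScalarFieldNonlinearity F θ M) :
    ∃ κ > 0, ∀ᶠ x in 𝓝[>] 0, F x ≤ -κ * x ∧ deriv F x ≤ -κ := by
  have hneg := hF.deriv_zero_neg
  have hlt : deriv F 0 < -(-deriv F 0 / 2) := by linarith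
  have hderiv : ∀ᶠ x in 𝓝[>] 0, deriv F x < -(-deriv F 0 / 2) :=
    nhdsWithin_le_nhds
      ((hF.contDiff.continuous_deriv_one.tendsto 0).eventually_lt_const hlt)
  have hslope : ∀ᶠ x in 𝓝[>] 0, slope F 0 x < -(-deriv F 0 / 2) :=
    ((hasDerivAt_iff_tendsto_slope.1 (hF.hasDerivAt 0)).mono_left
      (nhdsGT_le_nhdsNE 0)).eventually_lt_const hlt
  refine ⟨-deriv F 0 / 2, by linarith, ?_⟩
  filter_upwards [hderiv, hslope, self_mem_nhdsWithin] with x hx hs (hpos : 0 < x)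
  rw [slope_def_field, hF.map_zero, sub_zero, sub_zero, div_lt_iff₀ hpos] at hs
  exact ⟨hs.le, hx.le⟩

theorem isBigO_id (hF : IsScalarFieldNonlinearity F θ M) : F =O[𝓝 0] fun x => x := by
  simpa [hF.map_zero] using (hF.hasDerivAt 0).isBigO_sub

theorem pohozaevDensity_pos_of_lt (hF : IsScalarFieldNonlinearity F θ M) (n : ℕ) {x x' : ℝ}
    (hx' : 0 < x') (hlt : x' < x) (hxM : x < M) (h : 0 ≤ pohozaevDensity n F x') :
    0 < pohozaevDensity n F x := by
  have hcont := hF.contDiff.continuous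
  have hcontG := continuous_potential hcont
  have hcontΦ : Continuous (pohozaevDensity n F) := by unfold pohozaevDensity; fun_prop
  have hderiv : ∀ z, deriv (pohozaevDensity n F) z =
      -(n / 2 * (z * deriv F z) - ((n : ℝ) + 4) / 2 * F z) := fun z =>
    ((((hasDerivAt_potential hcont z).const_mul _).sub
      (((hasDerivAt_id z).mul (hF.hasDerivAt z)).const_mul _)).congr_deriv
        (by simp only [id]; ring)).deriv
  have hzero : pohozaevDensity n F 0 = 0 := by simp [pohozaevDensity, potential_zero]
  obtain ⟨ξ, hξ, hξneg⟩ : ∃ ξ ∈ Ioo 0 x', 0 ≤ deriv (pohozaevDensity n F) ξ := by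
    by_contra! hneg
    have hanti := strictAntiOn_of_deriv_neg (convex_Icc 0 x') hcontΦ.continuousOn
      (by rwa [interior_Icc])
    have := hanti (left_mem_Icc.2 hx'.le) (right_mem_Icc.2 hx'.le) hx'
    linarith
  have hmono := strictMonoOn_of_deriv_pos (convex_Icc x' x) hcontΦ.continuousOn fun z hz => by
    rw [interior_Icc] at hz
    by_contra! hz'
    rw [hderiv] at hz' hξneg
    have := hF.mul_deriv_sub_mul_pos_of_lt (α := n / 2) (γ := (n + 4) / 2) (by positivity)
      (by linarith) (by positivity) hξ.1 (hξ.2.trans hz.1) (hz.2.trans hxM) (by linarith)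
    linarith
  exact h.trans_lt (hmono (left_mem_Icc.2 hlt.le) (right_mem_Icc.2 hlt.le) hlt)

end IsScalarFieldNonlinearity

/-- `u` is a radial `C²` solution of the scalar field equation `Δu + F(u) = 0` on `ℝ^(n+2)`, away
from the origin. -/
structure IsRadialSolution (n : ℕ) (F u : ℝ → ℝ) : Prop where
  contDiff : ContDiff ℝ 2 u
  radialLaplacian_eq : ∀ r > 0, radialLaplacian n u r = -F (u r)

/-- The mechanical energy `u'² / 2 + G(u)` of a radial profile, `G` being the potential of `F`. -/
def radialEnergy (F u : ℝ → ℝ) (r : ℝ) : ℝ := deriv u r ^ 2 / 2 + potential F (u r)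

/-- The generator `r u' + l u` of the dilations `t ^ l * u (t * r)` of a profile. -/
def dilationGenerator (l : ℝ) (u : ℝ → ℝ) (r : ℝ) : ℝ := r * deriv u r + l * u r

/-- Pohozaev's functional in dimension `n + 2`. -/
def pohozaev (n : ℕ) (F u : ℝ → ℝ) (r : ℝ) : ℝ :=
  r ^ (n + 2) * radialEnergy F u r + n / 2 * (u r * (r ^ (n + 1) * deriv u r))

/-- The logarithmic slope `-r u' / u`, i.e. the exponent `l` for which `dilationGenerator l u`
vanishes at `r`. -/
def logSlope (u : ℝ → ℝ) (r : ℝ) : ℝ := -(r * deriv u r) / u r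

/-- The weighted derivative `r ^ (n+1) u² (logSlope u)'`, expressed through Pohozaev's
functional. -/
def logSlopeFlux (n : ℕ) (F u : ℝ → ℝ) (r : ℝ) : ℝ :=
  2 * pohozaev n F u r + r ^ (n + 2) * (u r * F (u r) - 2 * potential F (u r))

theorem dilationGenerator_logSlope_self {u : ℝ → ℝ} {r : ℝ} (hur : u r ≠ 0) :
    dilationGenerator (logSlope u r) u r = 0 := by
  rw [dilationGenerator, logSlope, div_mul_cancel₀ _ hur, add_neg_cancel]

namespace IsRadialSolution

variable {n : ℕ} {F u : ℝ → ℝ} {r : ℝ}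

theorem differentiable (hu : IsRadialSolution n F u) : Differentiable ℝ u :=
  hu.contDiff.differentiable two_ne_zero

theorem differentiable_deriv (hu : IsRadialSolution n F u) : Differentiable ℝ (deriv u) :=
  hu.contDiff.differentiable_deriv_two

theorem contDiff_deriv (hu : IsRadialSolution n F u) : ContDiff ℝ 1 (deriv u) :=
  hu.contDiff.deriv'

theorem deriv_deriv (hu : IsRadialSolution n F u) (hr : 0 < r) :
    deriv (deriv u) r = -((n + 1) / r * deriv u r) - F (u r) := by
  have := hu.radialLaplacian_eq r hr
  rw [radialLaplacian] at this
  linarith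

theorem hasDerivAt_deriv_deriv (hu : IsRadialSolution n F u) (hF : Differentiable ℝ F)
    (hr : 0 < r) :
    HasDerivAt (deriv (deriv u)) ((n + 1) / r ^ 2 * deriv u r - (n + 1) / r * deriv (deriv u) r
      - deriv F (u r) * deriv u r) r := by
  have heq : deriv (deriv u) =ᶠ[𝓝 r] fun s => -((n + 1) / s * deriv u s) - F (u s) := by
    filter_upwards [lt_mem_nhds hr] with s hs using hu.deriv_deriv hs
  refine HasDerivAt.congr_of_eventuallyEq ?_ heq
  have hcoeff : HasDerivAt (fun s : ℝ => (n + 1) / s) (-((n + 1) / r ^ 2)) r := by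
    simpa [div_eq_mul_inv, neg_div] using (hasDerivAt_inv hr.ne').const_mul ((n : ℝ) + 1)
  refine (((hcoeff.mul (hu.differentiable_deriv r).hasDerivAt).neg).sub
    ((hF (u r)).hasDerivAt.comp r (hu.differentiable r).hasDerivAt)).congr_deriv ?_
  ring

theorem radialLaplacian_deriv (hu : IsRadialSolution n F u) (hF : Differentiable ℝ F)
    (hr : 0 < r) :
    radialLaplacian n (deriv u) r = ((n + 1) / r ^ 2 - deriv F (u r)) * deriv u r := by
  rw [radialLaplacian, (hu.hasDerivAt_deriv_deriv hF hr).deriv]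
  ring

theorem hasDerivAt_dilationGenerator (hu : IsRadialSolution n F u) (l r : ℝ) :
    HasDerivAt (dilationGenerator l u) ((1 + l) * deriv u r + r * deriv (deriv u) r) r := by
  refine (((hasDerivAt_id r).mul (hu.differentiable_deriv r).hasDerivAt).add
    ((hu.differentiable r).hasDerivAt.const_mul l)).congr_deriv ?_
  simp only [id]
  ring

theorem hasDerivAt_deriv_dilationGenerator (hu : IsRadialSolution n F u)
    (hF : Differentiable ℝ F) (l : ℝ) (hr : 0 < r) :
    HasDerivAt (deriv (dilationGenerator l u))
      ((2 + l) * deriv (deriv u) r + r * deriv (deriv (deriv u)) r) r := by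
  rw [funext fun s => (hu.hasDerivAt_dilationGenerator l s).deriv]
  refine (((hu.differentiable_deriv r).hasDerivAt.const_mul (1 + l)).add
    ((hasDerivAt_id r).mul
      (hu.hasDerivAt_deriv_deriv hF hr).differentiableAt.hasDerivAt)).congr_deriv ?_
  simp only [id]
  ring

theorem radialLaplacian_dilationGenerator (hu : IsRadialSolution n F u)
    (hF : Differentiable ℝ F) (l : ℝ) (hr : 0 < r) :
    radialLaplacian n (dilationGenerator l u) r = -deriv F (u r) * dilationGenerator l u r +
      (l * (u r * deriv F (u r)) - (l + 2) * F (u r)) := by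
  rw [radialLaplacian, (hu.hasDerivAt_deriv_dilationGenerator hF l hr).deriv,
    (hu.hasDerivAt_dilationGenerator l r).deriv, (hu.hasDerivAt_deriv_deriv hF hr).deriv,
    hu.deriv_deriv hr, dilationGenerator]
  field_simp
  ring

theorem hasDerivAt_radialEnergy (hu : IsRadialSolution n F u) (hF : Continuous F) (hr : 0 < r) :
    HasDerivAt (radialEnergy F u) (-((n + 1) / r * deriv u r ^ 2)) r := by
  refine ((((hu.differentiable_deriv r).hasDerivAt.pow 2).div_const 2).add
    ((hasDerivAt_potential hF (u r)).comp r (hu.differentiable r).hasDerivAt)).congr_deriv ?_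
  rw [hu.deriv_deriv hr]
  ring

theorem continuous_radialEnergy (hu : IsRadialSolution n F u) (hF : Continuous F) :
    Continuous (radialEnergy F u) := by
  have hu' := hu.differentiable_deriv.continuous
  have hpot := (continuous_potential hF).comp hu.differentiable.continuous
  exact ((hu'.pow 2).div_const 2).add hpot

theorem antitoneOn_radialEnergy (hu : IsRadialSolution n F u) (hF : Continuous F) :
    AntitoneOn (radialEnergy F u) (Ici 0) := by
  refine antitoneOn_of_hasDerivWithinAt_nonpos (convex_Ici 0)
    (hu.continuous_radialEnergy hF).continuousOn
    (fun r hr => (hu.hasDerivAt_radialEnergy hF (interior_Ici.subset hr)).hasDerivWithinAt)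
    fun r hr => neg_nonpos.2 ?_
  have hpos : 0 < r := interior_Ici.subset hr
  positivity

theorem radialEnergy_nonneg (hu : IsRadialSolution n F u) (hF : Continuous F)
    (hlim : Tendsto u atTop (𝓝 0)) (hr : 0 ≤ r) : 0 ≤ radialEnergy F u r := by
  have hpot : Tendsto (fun s => potential F (u s)) atTop (𝓝 0) := by
    simpa only [potential_zero, Function.comp_def] using
      ((continuous_potential hF).tendsto 0).comp hlim
  refine le_of_tendsto hpot ?_
  filter_upwards [eventually_ge_atTop r] with s hs
  calc potential F (u s) ≤ radialEnergy F u s := le_add_of_nonneg_left (by positivity)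
    _ ≤ radialEnergy F u r := hu.antitoneOn_radialEnergy hF hr (hr.trans hs) hs

theorem hasDerivAt_pohozaev (hu : IsRadialSolution n F u) (hF : Continuous F) (hr : 0 < r) :
    HasDerivAt (pohozaev n F u) (r ^ (n + 1) * pohozaevDensity n F (u r)) r := by
  refine (((hasDerivAt_pow (n + 2) r).mul (hu.hasDerivAt_radialEnergy hF hr)).add
    (((hu.differentiable r).hasDerivAt.mul (hasDerivAt_pow_mul_deriv
      (hu.differentiable_deriv r) hr.ne')).const_mul ((n : ℝ) / 2))).congr_deriv ?_
  rw [hu.radialLaplacian_eq r hr, radialEnergy, pohozaevDensity]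
  push_cast
  field_simp
  ring

theorem continuous_pohozaev (hu : IsRadialSolution n F u) (hF : Continuous F) :
    Continuous (pohozaev n F u) := by
  have hE := hu.continuous_radialEnergy hF
  have hu' := hu.differentiable_deriv.continuous
  have hu₀ := hu.differentiable.continuous
  unfold pohozaev
  fun_prop

theorem hasDerivAt_logSlope (hu : IsRadialSolution n F u) (hr : 0 < r) (hur : u r ≠ 0) :
    HasDerivAt (logSlope u) (logSlopeFlux n F u r / (r ^ (n + 1) * u r ^ 2)) r := by
  refine (((hasDerivAt_id r).mul (hu.differentiable_deriv r).hasDerivAt).neg.div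
    (hu.differentiable r).hasDerivAt hur).congr_deriv ?_
  rw [hu.deriv_deriv hr, logSlopeFlux, pohozaev, radialEnergy]
  simp only [id, Pi.neg_apply, Pi.mul_apply]
  field_simp
  ring

theorem hasDerivAt_logSlopeFlux (hu : IsRadialSolution n F u) (hF : Differentiable ℝ F)
    (hr : 0 < r) :
    HasDerivAt (logSlopeFlux n F u) (r ^ (n + 1) *
      (2 * (u r * F (u r)) + r * (deriv u r * (u r * deriv F (u r) - F (u r))))) r := by
  have hpow : HasDerivAt (fun s : ℝ => s ^ (n + 2)) ((n + 2) * r ^ (n + 1)) r := by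
    simpa using hasDerivAt_pow (n + 2) r
  have hur := (hu.differentiable r).hasDerivAt
  refine (((hu.hasDerivAt_pohozaev hF.continuous hr).const_mul 2).add (hpow.mul
    ((hur.mul ((hF (u r)).hasDerivAt.comp r hur)).sub
      (((hasDerivAt_potential hF.continuous (u r)).comp r hur).const_mul 2)))).congr_deriv ?_
  simp only [pohozaevDensity, Function.comp_apply, Pi.sub_apply, Pi.mul_apply]
  ring

theorem continuous_logSlopeFlux (hu : IsRadialSolution n F u) (hF : Continuous F) :
    Continuous (logSlopeFlux n F u) := by
  have hpoh := hu.continuous_pohozaev hF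
  have hpot := continuous_potential hF
  have hu₀ := hu.differentiable.continuous
  unfold logSlopeFlux
  fun_prop

end IsRadialSolution

/-- A positive decaying radial solution, smooth at the origin and starting below the level `M`. -/
structure IsRadialGroundState (n : ℕ) (F : ℝ → ℝ) (M : ℝ) (u : ℝ → ℝ) : Prop
    extends IsRadialSolution n F u where
  deriv_zero : deriv u 0 = 0
  map_zero_lt : u 0 < M
  pos : ∀ r ≥ 0, 0 < u r
  tendsto_zero : Tendsto u atTop (𝓝 0)

namespace IsRadialGroundState

variable {n : ℕ} {F u : ℝ → ℝ} {θ M r : ℝ}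

section Monotonicity

theorem theta_lt_of_deriv_eq_zero (hu : IsRadialGroundState n F M u)
    (hF : IsScalarFieldNonlinearity F θ M) (hr : 0 ≤ r) (hur : deriv u r = 0) : θ < u r := by
  have henergy := hu.radialEnergy_nonneg hF.contDiff.continuous hu.tendsto_zero hr
  rw [radialEnergy, hur, zero_pow two_ne_zero, zero_div, zero_add] at henergy
  exact hF.lt_of_potential_nonneg (hu.pos r hr) henergy

theorem eventually_deriv_neg (hu : IsRadialGroundState n F M u)
    (hF : IsScalarFieldNonlinearity F θ M) : ∀ᶠ r in 𝓝[>] 0, deriv u r < 0 := by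
  have hF0 : 0 < F (u 0) :=
    hF.pos _ ⟨hu.theta_lt_of_deriv_eq_zero hF le_rfl hu.deriv_zero, hu.map_zero_lt⟩
  have hev : ∀ᶠ r in 𝓝[>] 0, 0 < F (u r) := nhdsWithin_le_nhds
    (((hF.contDiff.continuous.comp hu.contDiff.continuous).tendsto 0).eventually_const_lt hF0)
  obtain ⟨m, hm, hpos⟩ := mem_nhdsGT_iff_exists_Ioo_subset.1 hev
  filter_upwards [Ioo_mem_nhdsGT hm] with r hr
  refine deriv_neg_of_radialLaplacian_neg (n := n) hu.contDiff hr.1 fun s hs => ?_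
  rw [hu.radialLaplacian_eq s hs.1]
  exact neg_lt_zero.2 (hpos ⟨hs.1, hs.2.trans hr.2⟩)

theorem deriv_neg (hu : IsRadialGroundState n F M u) (hF : IsScalarFieldNonlinearity F θ M)
    (hr : 0 < r) : deriv u r < 0 := by
  by_contra! hnonneg
  obtain ⟨c, hc, hc0, hneg⟩ := exists_first_zero hu.differentiable_deriv.continuous
    (hu.eventually_deriv_neg hF) hr hnonneg
  have hanti : StrictAntiOn u (Icc 0 c) :=
    strictAntiOn_of_deriv_neg (convex_Icc 0 c) hu.contDiff.continuous.continuousOn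
      (by rwa [interior_Icc])
  refine (deriv_neg_of_radialLaplacian_neg (n := n) hu.contDiff hc.1 fun s hs => ?_).ne hc0
  have hθ : θ < u s := (hu.theta_lt_of_deriv_eq_zero hF hc.1.le hc0).trans
    (hanti (Ioo_subset_Icc_self hs) (right_mem_Icc.2 hc.1.le) hs.2)
  have hM : u s < M :=
    (hanti (left_mem_Icc.2 hc.1.le) (Ioo_subset_Icc_self hs) hs.1).trans hu.map_zero_lt
  rw [hu.radialLaplacian_eq s hs.1]
  exact neg_lt_zero.2 (hF.pos _ ⟨hθ, hM⟩)

theorem strictAntiOn (hu : IsRadialGroundState n F M u) (hF : IsScalarFieldNonlinearity F θ M) :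
    StrictAntiOn u (Ici 0) :=
  strictAntiOn_of_deriv_neg (convex_Ici 0) hu.contDiff.continuous.continuousOn fun r hr =>
    hu.deriv_neg hF (by rwa [interior_Ici] at hr)

theorem mem_Ioo (hu : IsRadialGroundState n F M u) (hF : IsScalarFieldNonlinearity F θ M)
    (hr : 0 ≤ r) : u r ∈ Ioo 0 M :=
  ⟨hu.pos r hr,
    ((hu.strictAntiOn hF).antitoneOn self_mem_Ici hr hr).trans_lt hu.map_zero_lt⟩

end Monotonicity

section Decay

theorem exists_eventually_le_neg_mul (hu : IsRadialGroundState n F M u)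
    (hF : IsScalarFieldNonlinearity F θ M) :
    ∃ κ > 0, ∀ᶠ r in atTop, F (u r) ≤ -κ * u r ∧ deriv F (u r) ≤ -κ := by
  obtain ⟨κ, hκ, hev⟩ := hF.exists_le_neg_mul
  refine ⟨κ, hκ, (tendsto_nhdsWithin_iff.2 ⟨hu.tendsto_zero, ?_⟩).eventually hev⟩
  filter_upwards [eventually_ge_atTop 0] with r hr using hu.pos r hr

theorem exists_eventually_mul_le_deriv_deriv (hu : IsRadialGroundState n F M u)
    (hF : IsScalarFieldNonlinearity F θ M) :
    ∃ κ > 0, ∀ᶠ r in atTop, κ * u r ≤ deriv (deriv u) r := by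
  obtain ⟨κ, hκ, hev⟩ := hu.exists_eventually_le_neg_mul hF
  refine ⟨κ, hκ, ?_⟩
  filter_upwards [hev, eventually_gt_atTop 0] with r ⟨hFr, _⟩ hr
  have hdamp : (n + 1) / r * deriv u r ≤ 0 :=
    mul_nonpos_of_nonneg_of_nonpos (by positivity) (hu.deriv_neg hF hr).le
  rw [hu.deriv_deriv hr]
  linarith

theorem exists_isBigO_exp_neg (hu : IsRadialGroundState n F M u)
    (hF : IsScalarFieldNonlinearity F θ M) :
    ∃ k > 0, (u =O[atTop] fun r => Real.exp (-k * r)) ∧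
      deriv u =O[atTop] fun r => Real.exp (-k * r) := by
  obtain ⟨κ, hκ, hu''⟩ := hu.exists_eventually_mul_le_deriv_deriv hF
  have hu₀ : ∀ᶠ r in atTop, 0 ≤ u r := by
    filter_upwards [eventually_ge_atTop 0] with r hr using (hu.pos r hr).le
  have hu' : ∀ᶠ r in atTop, deriv u r ≤ 0 := by
    filter_upwards [eventually_gt_atTop 0] with r hr using (hu.deriv_neg hF hr).le
  have hO := isBigO_exp_neg_sqrt hu.contDiff hκ.le hu₀ hu' hu'' hu.tendsto_zero
  refine ⟨√κ, Real.sqrt_pos.2 hκ, hO, isBigO_deriv_exp_neg hu.contDiff hu₀ hu' ?_ hO⟩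
  filter_upwards [hu₀, hu''] with r h₀ h using (mul_nonneg hκ.le h₀).trans h

theorem tendsto_pow_mul_deriv (hu : IsRadialGroundState n F M u)
    (hF : IsScalarFieldNonlinearity F θ M) (m : ℕ) :
    Tendsto (fun r => r ^ m * deriv u r) atTop (𝓝 0) := by
  obtain ⟨k, hk, -, hO⟩ := hu.exists_isBigO_exp_neg hF
  exact tendsto_pow_mul_of_isBigO_exp_neg hk hO m

theorem tendsto_pow_mul_deriv_deriv (hu : IsRadialGroundState n F M u)
    (hF : IsScalarFieldNonlinearity F θ M) (m : ℕ) :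
    Tendsto (fun r => r ^ m * deriv (deriv u) r) atTop (𝓝 0) := by
  obtain ⟨k, hk, hO, hO'⟩ := hu.exists_isBigO_exp_neg hF
  have hcoeff : (fun r : ℝ => (n + 1) / r) =O[atTop] fun _ => (1 : ℝ) :=
    (tendsto_const_nhds.div_atTop tendsto_id).isBigO_one ℝ
  have hdamp : (fun r => -((n + 1) / r * deriv u r)) =O[atTop] fun r => Real.exp (-k * r) := by
    simpa only [one_mul] using (hcoeff.mul hO').neg_left
  have hforce : (fun r => F (u r)) =O[atTop] fun r => Real.exp (-k * r) :=
    (hF.isBigO_id.comp_tendsto hu.tendsto_zero).trans hO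
  refine tendsto_pow_mul_of_isBigO_exp_neg hk ((hdamp.sub hforce).congr' ?_ .rfl) m
  filter_upwards [eventually_gt_atTop 0] with r hr using (hu.deriv_deriv hr).symm

end Decay

section LogSlope

theorem pohozaev_nonneg (hu : IsRadialGroundState n F M u) (hF : IsScalarFieldNonlinearity F θ M)
    (hr : 0 < r) : 0 ≤ pohozaev n F u r := by
  have hFc := hF.contDiff.continuous
  have hcont := (hu.continuous_pohozaev hFc).continuousOn (s := univ)
  rcases le_or_gt 0 (pohozaevDensity n F (u r)) with hdens | hdens
  · have hmono : MonotoneOn (pohozaev n F u) (Icc 0 r) := by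
      refine monotoneOn_of_hasDerivWithinAt_nonneg (convex_Icc 0 r) (hcont.mono (subset_univ _))
        (fun s hs => (hu.hasDerivAt_pohozaev hFc (interior_Icc.subset hs).1).hasDerivWithinAt)
        fun s hs => ?_
      rw [interior_Icc] at hs
      have hlt : u r < u s := hu.strictAntiOn hF hs.1.le hr.le hs.2
      exact mul_nonneg (pow_pos hs.1 _).le (hF.pohozaevDensity_pos_of_lt n (hu.pos r hr.le) hlt
        (hu.mem_Ioo hF hs.1.le).2 hdens).le
    simpa [pohozaev] using hmono (left_mem_Icc.2 hr.le) (right_mem_Icc.2 hr.le) hr.le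
  · have hanti : AntitoneOn (pohozaev n F u) (Ici r) := by
      refine antitoneOn_of_hasDerivWithinAt_nonpos (convex_Ici r) (hcont.mono (subset_univ _))
        (fun s hs => (hu.hasDerivAt_pohozaev hFc
          (hr.trans (interior_Ici.subset hs))).hasDerivWithinAt) fun s hs => ?_
      have hrs : r < s := interior_Ici.subset hs
      have hs0 := hr.trans hrs
      have hlt : u s < u r := hu.strictAntiOn hF hr.le hs0.le hrs
      refine mul_nonpos_of_nonneg_of_nonpos (pow_pos hs0 _).le (le_of_not_gt fun hpos => ?_)
      exact lt_asymm hdens (hF.pohozaevDensity_pos_of_lt n (hu.pos s hs0.le) hlt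
        (hu.mem_Ioo hF hr.le).2 hpos.le)
    have hlim : Tendsto (fun s => n / 2 * (u s * (s ^ (n + 1) * deriv u s))) atTop (𝓝 0) := by
      simpa using
        (hu.tendsto_zero.mul (hu.tendsto_pow_mul_deriv hF (n + 1))).const_mul ((n : ℝ) / 2)
    refine le_of_tendsto hlim ?_
    filter_upwards [eventually_ge_atTop r] with s hs
    have henergy := hu.radialEnergy_nonneg hFc hu.tendsto_zero (hr.le.trans hs)
    exact (le_add_of_nonneg_left (mul_nonneg (pow_nonneg (hr.le.trans hs) _) henergy)).trans
      (hanti self_mem_Ici hs hs)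

theorem logSlopeFlux_nonneg (hu : IsRadialGroundState n F M u)
    (hF : IsScalarFieldNonlinearity F θ M) (hr : 0 < r) : 0 ≤ logSlopeFlux n F u r := by
  have hur := hu.mem_Ioo hF hr.le
  rcases le_or_gt 0 (u r * deriv F (u r) - F (u r)) with hsuper | hsub
  · have hpot := sub_nonneg.2 (hF.two_mul_potential_le hur hsuper)
    exact add_nonneg (mul_nonneg zero_le_two (hu.pohozaev_nonneg hF hr))
      (mul_nonneg (pow_pos hr _).le hpot)
  have hFd := hF.contDiff.differentiable one_ne_zero
  have hmono : MonotoneOn (logSlopeFlux n F u) (Icc 0 r) := by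
    refine monotoneOn_of_hasDerivWithinAt_nonneg (convex_Icc 0 r)
      (hu.continuous_logSlopeFlux hFd.continuous).continuousOn
      (fun s hs => (hu.hasDerivAt_logSlopeFlux hFd (interior_Icc.subset hs).1).hasDerivWithinAt)
      fun s hs => ?_
    rw [interior_Icc] at hs
    have hus := hu.mem_Ioo hF hs.1.le
    have hsub' : u s * deriv F (u s) - F (u s) < 0 := by
      by_contra! hsuper
      have := hF.mul_deriv_sub_mul_pos_of_lt (α := 1) (γ := 1) zero_le_one le_rfl one_pos hur.1
        (hu.strictAntiOn hF hs.1.le hr.le hs.2) hus.2 (by linarith)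
      linarith
    have hforce := mul_pos hus.1 (hF.pos_of_mul_deriv_sub_neg hus hsub')
    have hslope := mul_pos hs.1 (mul_pos_of_neg_of_neg (hu.deriv_neg hF hs.1) hsub')
    exact mul_nonneg (pow_pos hs.1 _).le (by linarith)
  simpa [logSlopeFlux, pohozaev] using
    hmono (left_mem_Icc.2 hr.le) (right_mem_Icc.2 hr.le) hr.le

theorem monotoneOn_logSlope (hu : IsRadialGroundState n F M u)
    (hF : IsScalarFieldNonlinearity F θ M) : MonotoneOn (logSlope u) (Ioi 0) := by
  have hderiv : ∀ r > 0, HasDerivAt (logSlope u) _ r := fun r hr =>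
    hu.hasDerivAt_logSlope hr (hu.pos r hr.le).ne'
  refine monotoneOn_of_hasDerivWithinAt_nonneg (convex_Ioi 0)
    (fun r hr => (hderiv r hr).continuousAt.continuousWithinAt)
    (fun r hr => (hderiv r (interior_subset hr)).hasDerivWithinAt) fun r hr => ?_
  have hr : 0 < r := interior_subset hr
  exact div_nonneg (hu.logSlopeFlux_nonneg hF hr) (by positivity)

theorem logSlope_pos (hu : IsRadialGroundState n F M u) (hF : IsScalarFieldNonlinearity F θ M)
    (hr : 0 < r) : 0 < logSlope u r :=
  div_pos (neg_pos.2 (mul_neg_of_pos_of_neg hr (hu.deriv_neg hF hr))) (hu.pos r hr.le)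

theorem dilationGenerator_logSlope_nonpos (hu : IsRadialGroundState n F M u)
    (hF : IsScalarFieldNonlinearity F θ M) {s : ℝ} (hr : 0 < r) (hrs : r ≤ s) :
    dilationGenerator (logSlope u r) u s ≤ 0 := by
  have hle := hu.monotoneOn_logSlope hF hr (hr.trans_le hrs) hrs
  rw [logSlope, logSlope, ← logSlope, le_div_iff₀ (hu.pos s (hr.le.trans hrs))] at hle
  rw [dilationGenerator]
  linarith

end LogSlope

theorem tendsto_pow_mul_deriv_dilationGenerator (hu : IsRadialGroundState n F M u)
    (hF : IsScalarFieldNonlinearity F θ M) (l : ℝ) (m : ℕ) :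
    Tendsto (fun r => r ^ m * deriv (dilationGenerator l u) r) atTop (𝓝 0) := by
  have hlim := ((hu.tendsto_pow_mul_deriv hF m).const_mul (1 + l)).add
    (hu.tendsto_pow_mul_deriv_deriv hF (m + 1))
  rw [mul_zero, add_zero] at hlim
  refine hlim.congr fun r => ?_
  rw [(hu.hasDerivAt_dilationGenerator l r).deriv]
  ring

end IsRadialGroundState

/-- `v` solves the linearization `Δv + F'(u) v = 0` of the scalar field equation at `u` on
`ℝ^(n+2)`, away from the origin. -/
structure IsRadialLinearization (n : ℕ) (F u v : ℝ → ℝ) : Prop where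
  contDiff : ContDiff ℝ 2 v
  radialLaplacian_eq : ∀ r > 0, radialLaplacian n v r = -deriv F (u r) * v r

/-- `r` is the first positive zero of a function that is positive to its left. -/
structure IsFirstZero (v : ℝ → ℝ) (r : ℝ) : Prop where
  pos : 0 < r
  map_eq_zero : v r = 0
  pos_left : ∀ s ∈ Ioo 0 r, 0 < v s

namespace IsRadialLinearization

variable {n : ℕ} {F u v : ℝ → ℝ} {θ M r r₀ : ℝ}

theorem differentiable (hv : IsRadialLinearization n F u v) : Differentiable ℝ v :=
  hv.contDiff.differentiable two_ne_zero

theorem differentiable_deriv (hv : IsRadialLinearization n F u v) : Differentiable ℝ (deriv v) :=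
  hv.contDiff.differentiable_deriv_two

section FirstZero

theorem hasDerivAt_radialWronskian_deriv (hv : IsRadialLinearization n F u v)
    (hu : IsRadialSolution n F u) (hF : Differentiable ℝ F) (hr : 0 < r) :
    HasDerivAt (radialWronskian n (deriv u) v)
      (r ^ (n + 1) * ((n + 1) / r ^ 2 * (deriv u r * v r))) r := by
  refine (hasDerivAt_radialWronskian (hu.differentiable_deriv r)
    (hu.hasDerivAt_deriv_deriv hF hr).differentiableAt (hv.differentiable r)
    (hv.differentiable_deriv r) hr.ne').congr_deriv ?_
  rw [hu.radialLaplacian_deriv hF hr, hv.radialLaplacian_eq r hr]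
  ring

theorem strictAntiOn_radialWronskian_deriv (hv : IsRadialLinearization n F u v)
    (hu : IsRadialGroundState n F M u) (hF : IsScalarFieldNonlinearity F θ M)
    (hpos : ∀ s ∈ Ioo 0 r, 0 < v s) :
    StrictAntiOn (radialWronskian n (deriv u) v) (Icc 0 r) := by
  have hFd := hF.contDiff.differentiable one_ne_zero
  refine strictAntiOn_of_hasDerivWithinAt_neg (convex_Icc 0 r)
    (continuous_radialWronskian hu.contDiff_deriv (hv.contDiff.of_le one_le_two)).continuousOn
    (fun s hs => (hv.hasDerivAt_radialWronskian_deriv hu.toIsRadialSolution hFd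
      (interior_Icc.subset hs).1).hasDerivWithinAt) fun s hs => ?_
  rw [interior_Icc] at hs
  have hs₀ := hs.1
  exact mul_neg_of_pos_of_neg (by positivity) (mul_neg_of_pos_of_neg (by positivity)
    (mul_neg_of_neg_of_pos (hu.deriv_neg hF hs₀) (hpos s hs)))

theorem radialWronskian_deriv_neg (hv : IsRadialLinearization n F u v)
    (hu : IsRadialGroundState n F M u) (hF : IsScalarFieldNonlinearity F θ M) (hr : 0 < r)
    (hpos : ∀ s ∈ Ioo 0 r, 0 < v s) : radialWronskian n (deriv u) v r < 0 := by
  simpa only [radialWronskian_apply_zero] using hv.strictAntiOn_radialWronskian_deriv hu hF hpos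
    (left_mem_Icc.2 hr.le) (right_mem_Icc.2 hr.le) hr

-- If `v` stayed positive, its flux `r ^ (n+1) v'` would be increasing eventually, bounding the
-- negative, decreasing Wronskian of `u'` and `v` from below by a multiple of `u' → 0`.
theorem exists_nonpos (hv : IsRadialLinearization n F u v) (hu : IsRadialGroundState n F M u)
    (hF : IsScalarFieldNonlinearity F θ M) : ∃ r > 0, v r ≤ 0 := by
  by_contra! hpos
  obtain ⟨κ, hκ, hcoer⟩ := hu.exists_eventually_le_neg_mul hF
  obtain ⟨κ', hκ', hconv⟩ := hu.exists_eventually_mul_le_deriv_deriv hF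
  obtain ⟨R, hR⟩ := eventually_atTop.1 ((hcoer.and hconv).and (eventually_gt_atTop 0))
  have hR₀ : 0 < R := (hR R le_rfl).2
  have hflux : ∀ r ≥ R, HasDerivAt (fun s => s ^ (n + 1) * deriv v s) _ r := fun r hr =>
    hasDerivAt_pow_mul_deriv (hv.differentiable_deriv r) (hR₀.trans_le hr).ne'
  have hmono : MonotoneOn (fun s => s ^ (n + 1) * deriv v s) (Ici R) := by
    refine monotoneOn_of_hasDerivWithinAt_nonneg (convex_Ici R)
      (fun s hs => (hflux s hs).continuousAt.continuousWithinAt)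
      (fun s hs => (hflux s (interior_subset hs)).hasDerivWithinAt) fun s hs => ?_
    have hs₀ := hR₀.trans_le (interior_subset hs)
    rw [hv.radialLaplacian_eq s hs₀]
    exact mul_nonneg (pow_pos hs₀ _).le
      (mul_nonneg (by linarith [(hR s (interior_subset hs)).1.1.2]) (hpos s hs₀).le)
  have hlim : Tendsto (fun r => -(deriv u r * (R ^ (n + 1) * deriv v R))) atTop (𝓝 0) := by
    simpa using ((hu.tendsto_pow_mul_deriv hF 0).mul_const (R ^ (n + 1) * deriv v R)).neg
  refine (hv.radialWronskian_deriv_neg hu hF hR₀ fun s hs => hpos s hs.1).not_ge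
    (le_of_tendsto hlim ?_)
  filter_upwards [eventually_ge_atTop R] with r hr
  have hr₀ : 0 < r := hR₀.trans_le hr
  have hu'' : 0 ≤ deriv (deriv u) r :=
    (mul_pos hκ' (hu.pos r hr₀.le)).le.trans (hR r hr).1.2
  calc -(deriv u r * (R ^ (n + 1) * deriv v R))
      ≤ -(deriv u r * (r ^ (n + 1) * deriv v r)) := neg_le_neg
        (mul_le_mul_of_nonpos_left (hmono self_mem_Ici hr hr) (hu.deriv_neg hF hr₀).le)
    _ ≤ radialWronskian n (deriv u) v r := by
        rw [radialWronskian]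
        linarith [mul_nonneg (pow_pos hr₀ (n + 1)).le (mul_nonneg hu'' (hpos r hr₀).le)]
    _ ≤ radialWronskian n (deriv u) v R :=
        (hv.strictAntiOn_radialWronskian_deriv hu hF fun s hs => hpos s hs.1).antitoneOn
          ⟨hR₀.le, hr⟩ (right_mem_Icc.2 hr₀.le) hr

theorem exists_isFirstZero (hv : IsRadialLinearization n F u v)
    (hu : IsRadialGroundState n F M u) (hF : IsScalarFieldNonlinearity F θ M) (hv₀ : 0 < v 0) :
    ∃ r, IsFirstZero v r := by
  obtain ⟨t, ht, hvt⟩ := hv.exists_nonpos hu hF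
  have hcont := hv.contDiff.continuous
  have hev : ∀ᶠ s in 𝓝[>] 0, -v s < 0 := by
    filter_upwards [nhdsWithin_le_nhds ((hcont.tendsto 0).eventually_const_lt hv₀)] with s hs
    exact neg_lt_zero.2 hs
  obtain ⟨r, hr, hvr, hleft⟩ := exists_first_zero hcont.neg hev ht (neg_nonneg.2 hvt)
  exact ⟨r, hr.1, neg_eq_zero.1 hvr, fun s hs => neg_lt_zero.1 (hleft s hs)⟩

theorem deriv_neg_of_isFirstZero (hv : IsRadialLinearization n F u v)
    (hu : IsRadialGroundState n F M u) (hF : IsScalarFieldNonlinearity F θ M)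
    (h₀ : IsFirstZero v r₀) : deriv v r₀ < 0 := by
  have hW := hv.radialWronskian_deriv_neg hu hF h₀.pos h₀.pos_left
  rw [radialWronskian, h₀.map_eq_zero, mul_zero, zero_sub] at hW
  have huv := neg_lt_zero.1 (neg_of_mul_neg_right hW (pow_pos h₀.pos _).le)
  exact neg_of_mul_pos_right huv (hu.deriv_neg hF h₀.pos).le

end FirstZero

section Divergence

theorem hasDerivAt_radialWronskian_dilationGenerator (hv : IsRadialLinearization n F u v)
    (hu : IsRadialSolution n F u) (hF : Differentiable ℝ F) (l : ℝ) (hr : 0 < r) :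
    HasDerivAt (radialWronskian n (dilationGenerator l u) v)
      (r ^ (n + 1) * ((l * (u r * deriv F (u r)) - (l + 2) * F (u r)) * v r)) r := by
  refine (hasDerivAt_radialWronskian (hu.hasDerivAt_dilationGenerator l r).differentiableAt
    (hu.hasDerivAt_deriv_dilationGenerator hF l hr).differentiableAt (hv.differentiable r)
    (hv.differentiable_deriv r) hr.ne').congr_deriv ?_
  rw [hu.radialLaplacian_dilationGenerator hF l hr, hv.radialLaplacian_eq r hr]
  ring

theorem continuous_radialWronskian_dilationGenerator (hv : IsRadialLinearization n F u v)
    (hu : IsRadialSolution n F u) (l : ℝ) :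
    Continuous (radialWronskian n (dilationGenerator l u) v) :=
  continuous_radialWronskian
    ((contDiff_id.mul hu.contDiff_deriv).add (contDiff_const.mul (hu.contDiff.of_le one_le_two)))
    (hv.contDiff.of_le one_le_two)

-- The Wronskian of `dilationGenerator (logSlope u r₀) u` and `v` vanishes at `0` and at `r₀`, so by
-- Rolle its source has a zero inside `(0, r₀)`.
theorem logSlope_source_pos (hv : IsRadialLinearization n F u v)
    (hu : IsRadialGroundState n F M u) (hF : IsScalarFieldNonlinearity F θ M)
    (h₀ : IsFirstZero v r₀) (hr : r₀ ≤ r) :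
    0 < logSlope u r₀ * (u r * deriv F (u r)) - (logSlope u r₀ + 2) * F (u r) := by
  have hl := hu.logSlope_pos hF h₀.pos
  have hends : radialWronskian n (dilationGenerator (logSlope u r₀) u) v 0 =
      radialWronskian n (dilationGenerator (logSlope u r₀) u) v r₀ := by
    rw [radialWronskian_apply_zero, radialWronskian, h₀.map_eq_zero,
      dilationGenerator_logSlope_self (hu.pos _ h₀.pos.le).ne']
    ring
  obtain ⟨s, hs, hs'⟩ := exists_deriv_eq_zero h₀.pos
    (hv.continuous_radialWronskian_dilationGenerator hu.toIsRadialSolution _).continuousOn hends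
  rw [(hv.hasDerivAt_radialWronskian_dilationGenerator hu.toIsRadialSolution
    (hF.contDiff.differentiable one_ne_zero) _ hs.1).deriv,
    mul_eq_zero_iff_left (pow_pos hs.1 _).ne', mul_eq_zero_iff_right (h₀.pos_left s hs).ne'] at hs'
  exact hF.mul_deriv_sub_mul_pos_of_lt hl.le (by linarith) (by linarith)
    (hu.pos r (h₀.pos.le.trans hr)) (hu.strictAntiOn hF hs.1.le (h₀.pos.le.trans hr)
      (hs.2.trans_le hr)) (hu.mem_Ioo hF hs.1.le).2 hs'.ge

theorem strictAntiOn_radialWronskian_dilationGenerator (hv : IsRadialLinearization n F u v)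
    (hu : IsRadialGroundState n F M u) (hF : IsScalarFieldNonlinearity F θ M)
    (h₀ : IsFirstZero v r₀) (hneg : ∀ s ∈ Ioo r₀ r, v s < 0) :
    StrictAntiOn (radialWronskian n (dilationGenerator (logSlope u r₀) u) v) (Icc r₀ r) := by
  refine strictAntiOn_of_hasDerivWithinAt_neg (convex_Icc r₀ r)
    (hv.continuous_radialWronskian_dilationGenerator hu.toIsRadialSolution _).continuousOn
    (fun s hs => (hv.hasDerivAt_radialWronskian_dilationGenerator hu.toIsRadialSolution
      (hF.contDiff.differentiable one_ne_zero) _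
        (h₀.pos.trans (interior_Icc.subset hs).1)).hasDerivWithinAt) fun s hs => ?_
  rw [interior_Icc] at hs
  exact mul_neg_of_pos_of_neg (pow_pos (h₀.pos.trans hs.1) _)
    (mul_neg_of_pos_of_neg (hv.logSlope_source_pos hu hF h₀ hs.1.le) (hneg s hs))

theorem radialWronskian_dilationGenerator_neg (hv : IsRadialLinearization n F u v)
    (hu : IsRadialGroundState n F M u) (hF : IsScalarFieldNonlinearity F θ M)
    (h₀ : IsFirstZero v r₀) (hr : r₀ < r) (hneg : ∀ s ∈ Ioo r₀ r, v s < 0) :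
    radialWronskian n (dilationGenerator (logSlope u r₀) u) v r < 0 := by
  refine (hv.strictAntiOn_radialWronskian_dilationGenerator hu hF h₀ hneg (left_mem_Icc.2 hr.le)
    (right_mem_Icc.2 hr.le) hr).trans_eq ?_
  rw [radialWronskian, h₀.map_eq_zero, dilationGenerator_logSlope_self (hu.pos _ h₀.pos.le).ne']
  ring

theorem neg_of_isFirstZero_lt (hv : IsRadialLinearization n F u v)
    (hu : IsRadialGroundState n F M u) (hF : IsScalarFieldNonlinearity F θ M)
    (h₀ : IsFirstZero v r₀) (hr : r₀ < r) : v r < 0 := by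
  by_contra! hvr
  have hev := eventually_nhdsGT_neg_of_deriv_neg h₀.map_eq_zero
    (hv.deriv_neg_of_isFirstZero hu hF h₀)
  obtain ⟨c, hc, hvc, hneg⟩ := exists_first_zero hv.contDiff.continuous hev hr hvr
  refine (hv.radialWronskian_dilationGenerator_neg hu hF h₀ hc.1 hneg).not_ge ?_
  have hw := hu.dilationGenerator_logSlope_nonpos hF h₀.pos hc.1.le
  have hwv := mul_nonpos_of_nonpos_of_nonneg hw (deriv_nonneg_of_neg_left hc.1 hneg hvc)
  rw [radialWronskian, hvc]
  exact mul_nonneg (pow_pos (h₀.pos.trans hc.1) _).le (by linarith)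

theorem exists_deriv_neg (hv : IsRadialLinearization n F u v)
    (hu : IsRadialGroundState n F M u) (hF : IsScalarFieldNonlinearity F θ M)
    (h₀ : IsFirstZero v r₀) {R : ℝ} (hR : r₀ < R) : ∃ r ≥ R, deriv v r < 0 := by
  by_contra! hv'
  have hneg : ∀ r > r₀, v r < 0 := fun r hr => hv.neg_of_isFirstZero_lt hu hF h₀ hr
  have hmono : MonotoneOn v (Ici R) :=
    monotoneOn_of_deriv_nonneg (convex_Ici R) hv.contDiff.continuous.continuousOn
      hv.differentiable.differentiableOn fun r hr => hv' r (interior_subset hr)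
  have hbdd : ∀ᶠ r in atTop, |v r| ≤ -v R := by
    filter_upwards [eventually_ge_atTop R] with r hr
    rw [abs_of_neg (hneg r (hR.trans_le hr))]
    exact neg_le_neg (hmono self_mem_Ici hr hr)
  have hlim := bdd_le_mul_tendsto_zero' (-v R) hbdd
    (hu.tendsto_pow_mul_deriv_dilationGenerator hF (logSlope u r₀) (n + 1))
  refine (hv.radialWronskian_dilationGenerator_neg hu hF h₀ hR fun s hs => hneg s hs.1).not_ge
    (le_of_tendsto hlim ?_)
  filter_upwards [eventually_ge_atTop R] with r hr
  have hr₀ : r₀ < r := hR.trans_le hr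
  have hw := hu.dilationGenerator_logSlope_nonpos hF h₀.pos hr₀.le
  have hflux := mul_nonpos_of_nonneg_of_nonpos (pow_pos (h₀.pos.trans hr₀) (n + 1)).le
    (mul_nonpos_of_nonpos_of_nonneg hw (hv' r hr))
  have hle := (hv.strictAntiOn_radialWronskian_dilationGenerator hu hF h₀
    fun s hs => hneg s hs.1).antitoneOn ⟨hR.le, hr⟩ (right_mem_Icc.2 hr₀.le) hr
  refine le_trans ?_ hle
  rw [radialWronskian]
  linarith

theorem exists_eventually_le_neg_mul_exp (hv : IsRadialLinearization n F u v)
    (hu : IsRadialGroundState n F M u) (hF : IsScalarFieldNonlinearity F θ M) (hv₀ : 0 < v 0) :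
    ∃ c > 0, ∃ ε > 0, ∀ᶠ r in atTop,
      v r ≤ -c * Real.exp (ε * r) ∧ deriv v r ≤ -c * Real.exp (ε * r) := by
  obtain ⟨r₀, h₀⟩ := hv.exists_isFirstZero hu hF hv₀
  obtain ⟨κ, hκ, hcoer⟩ := hu.exists_eventually_le_neg_mul hF
  obtain ⟨R₁, hR₁⟩ := eventually_atTop.1 (hcoer.and (eventually_gt_atTop r₀))
  obtain ⟨R, hR, hvR⟩ := hv.exists_deriv_neg hu hF h₀ (hR₁ R₁ le_rfl).2
  have hneg : ∀ r ≥ R, v r < 0 := fun r hr =>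
    hv.neg_of_isFirstZero_lt hu hF h₀ (hR₁ r (hR.trans hr)).2
  have hΔ : ∀ r ≥ R, radialLaplacian n v r ≤ κ * v r := fun r hr => by
    obtain ⟨⟨-, hF'⟩, hr₀⟩ := hR₁ r (hR.trans hr)
    rw [hv.radialLaplacian_eq r (h₀.pos.trans hr₀)]
    exact mul_le_mul_of_nonpos_right (le_neg_of_le_neg hF') (hneg r hr).le
  obtain ⟨c, hc, ε, hε, hexp⟩ :=
    exists_le_neg_mul_exp hv.contDiff hκ (h₀.pos.trans (hR₁ R hR).2) hΔ hneg hvR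
  exact ⟨c, hc, ε, hε, eventually_atTop.2 ⟨R, hexp⟩⟩

end Divergence

end IsRadialLinearization

theorem tendsto_neg_mul_exp_atBot {c ε : ℝ} (hc : 0 < c) (hε : 0 < ε) :
    Tendsto (fun r => -c * Real.exp (ε * r)) atTop atBot :=
  (Real.tendsto_exp_atTop.comp (tendsto_id.const_mul_atTop hε)).const_mul_atTop_of_neg
    (neg_neg_of_pos hc)

theorem linearized_solution_diverges_general {n : ℕ} {F u v : ℝ → ℝ} {θ M : ℝ}
    (hF : IsScalarFieldNonlinearity F θ M) (hu : IsRadialGroundState n F M u)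
    (hv : IsRadialLinearization n F u v) (hv₀ : 0 < v 0) :
    Tendsto v atTop atBot ∧ Tendsto (deriv v) atTop atBot ∧
    ∃ c > (0 : ℝ), ∃ ε > (0 : ℝ), ∀ᶠ r in atTop,
      v r ≤ -c * Real.exp (ε * r) ∧ deriv v r ≤ -c * Real.exp (ε * r) := by
  obtain ⟨c, hc, ε, hε, hexp⟩ := hv.exists_eventually_le_neg_mul_exp hu hF hv₀
  have hbot := tendsto_neg_mul_exp_atBot hc hε
  exact ⟨tendsto_atBot_mono' _ (hexp.mono fun _ h => h.1) hbot,
    tendsto_atBot_mono' _ (hexp.mono fun _ h => h.2) hbot, c, hc, ε, hε, hexp⟩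

section Trigonometry

theorem mul_cos_lt_sin {t : ℝ} (ht : 0 < t) (htπ : t < π) : t * cos t < sin t := by
  have hderiv : ∀ x, HasDerivAt (fun x => sin x - x * cos x) (x * sin x) x := fun x =>
    ((hasDerivAt_sin x).sub ((hasDerivAt_id x).mul (hasDerivAt_cos x))).congr_deriv (by simp)
  have hmono : StrictMonoOn (fun x => sin x - x * cos x) (Icc 0 t) :=
    strictMonoOn_of_hasDerivWithinAt_pos (convex_Icc 0 t) (by fun_prop)
      (fun x _ => (hderiv x).hasDerivWithinAt) fun x hx => by
        rw [interior_Icc] at hx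
        exact mul_pos hx.1 (sin_pos_of_pos_of_lt_pi hx.1 (hx.2.trans htπ))
  have := hmono (left_mem_Icc.2 ht.le) (right_mem_Icc.2 ht.le) ht
  simp only [sin_zero, zero_mul, sub_zero] at this
  exact sub_pos.1 this

theorem hasDerivAt_mul_cot {x : ℝ} (hx : sin x ≠ 0) :
    HasDerivAt (fun t => t * (cos t / sin t)) ((sin x * cos x - x) / sin x ^ 2) x := by
  refine ((hasDerivAt_id x).mul ((hasDerivAt_cos x).div (hasDerivAt_sin x) hx)).congr_deriv ?_
  simp only [id, Pi.div_apply]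
  field_simp
  linear_combination (-x) * sin_sq_add_cos_sq x

theorem hasDerivAt_mul_sin_div_sub_cos {c x : ℝ} (hx : c - cos x ≠ 0) :
    HasDerivAt (fun t => t * sin t / (c - cos t))
      (((sin x + x * cos x) * (c - cos x) - x * sin x ^ 2) / (c - cos x) ^ 2) x := by
  refine (((hasDerivAt_id x).mul (hasDerivAt_sin x)).div
    ((hasDerivAt_cos x).const_sub c) hx).congr_deriv ?_
  simp only [id, Pi.mul_apply]
  ring

theorem sin_add_mul_cos_mul_lt {c x : ℝ} (hc : c < 1) (hx : 0 < x) (hsin : 0 < sin x)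
    (hcos : cos x < c) : (sin x + x * cos x) * (c - cos x) < x * sin x ^ 2 := by
  rcases le_or_gt (sin x + x * cos x) 0 with h | h
  · exact (mul_nonpos_of_nonpos_of_nonneg h (sub_pos.2 hcos).le).trans_lt (by positivity)
  · calc (sin x + x * cos x) * (c - cos x) < (sin x + x * cos x) * (1 - cos x) := by gcongr
      _ ≤ (x + x * cos x) * (1 - cos x) := by
        gcongr
        · exact sub_nonneg.2 (cos_le_one x)
        · exact (sin_lt hx).le
      _ = x * sin x ^ 2 := by linear_combination (-x) * sin_sq_add_cos_sq x

theorem strictAntiOn_mul_cot_add {c : ℝ} (hc : c ∈ Ioo (-1) 1) :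
    StrictAntiOn (fun t => t * (cos t / sin t) + t * sin t / (c - cos t)) (Ioo (arccos c) π) := by
  have hx₀ : ∀ x ∈ Ioo (arccos c) π, 0 < x := fun x hx => (arccos_nonneg c).trans_lt hx.1
  have hsin : ∀ x ∈ Ioo (arccos c) π, 0 < sin x := fun x hx =>
    sin_pos_of_pos_of_lt_pi (hx₀ x hx) hx.2
  have hcos : ∀ x ∈ Ioo (arccos c) π, cos x < c := fun x hx =>
    (cos_lt_cos_of_nonneg_of_le_pi (arccos_nonneg c) hx.2.le hx.1).trans_eq
      (cos_arccos hc.1.le hc.2.le)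
  have hderiv : ∀ x ∈ Ioo (arccos c) π,
      HasDerivAt (fun t => t * (cos t / sin t) + t * sin t / (c - cos t)) _ x := fun x hx =>
    (hasDerivAt_mul_cot (hsin x hx).ne').add
      (hasDerivAt_mul_sin_div_sub_cos (sub_pos.2 (hcos x hx)).ne')
  refine strictAntiOn_of_hasDerivWithinAt_neg (convex_Ioo _ _)
    (fun x hx => (hderiv x hx).continuousAt.continuousWithinAt)
    (fun x hx => (hderiv x (interior_subset hx)).hasDerivWithinAt) fun x hx => ?_
  have hx := interior_subset hx
  have hcot : sin x * cos x < x :=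
    (mul_le_of_le_one_right (hsin x hx).le (cos_le_one x)).trans_lt (sin_lt (hx₀ x hx))
  exact add_neg (div_neg_of_neg_of_pos (sub_neg.2 hcot) (pow_pos (hsin x hx) 2))
    (div_neg_of_neg_of_pos
      (sub_neg.2 (sin_add_mul_cos_mul_lt hc.2 (hx₀ x hx) (hsin x hx) (hcos x hx)))
      (pow_pos (sub_pos.2 (hcos x hx)) 2))

theorem sin_two_mul_pos {x : ℝ} (hx : x ∈ Ioo 0 (π / 2)) : 0 < sin (2 * x) :=
  sin_pos_of_pos_of_lt_pi (by linarith [hx.1]) (by linarith [hx.2])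

end Trigonometry

section Fnl

variable {a b : ℝ}

theorem Fnl_eq_double_angle (a b x : ℝ) :
    Fnl a b x = a / 4 * (sin (2 * x) * (1 - 2 * (b / a) - cos (2 * x))) := by
  rw [Fnl, sin_sq_eq_half_sub]
  ring

theorem deriv_Fnl (a b x : ℝ) : deriv (Fnl a b) x =
    a / 2 * (cos (2 * x) * (1 - 2 * (b / a) - cos (2 * x)) + sin (2 * x) ^ 2) := by
  have hlin : HasDerivAt (fun x : ℝ => 2 * x) 2 x := by simpa using (hasDerivAt_id x).const_mul 2
  rw [funext (Fnl_eq_double_angle a b)]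
  refine HasDerivAt.deriv
    (((hlin.sin.mul (hlin.cos.const_sub _)).const_mul (a / 4)).congr_deriv ?_)
  ring

theorem mul_deriv_div_Fnl {x : ℝ} (ha : a ≠ 0)
    (hcos : 1 - 2 * (b / a) - cos (2 * x) ≠ 0) :
    x * deriv (Fnl a b) x / Fnl a b x = 2 * x * (cos (2 * x) / sin (2 * x)) +
      2 * x * sin (2 * x) / (1 - 2 * (b / a) - cos (2 * x)) := by
  rw [deriv_Fnl, Fnl_eq_double_angle]
  generalize 1 - 2 * (b / a) - cos (2 * x) = p at *
  field_simp
  ring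

theorem Fnl_lt_mul_deriv {x : ℝ} (ha : 0 < a) (hx : x ∈ Ioo 0 (π / 2))
    (hcos : 1 - 2 * (b / a) ≤ cos (2 * x)) : Fnl a b x < x * deriv (Fnl a b) x := by
  have hx₀ : 0 < 2 * x := mul_pos two_pos hx.1
  have hxπ : 2 * x < π := by linarith [hx.2]
  have hsin := sin_two_mul_pos hx
  have hconc : 0 ≤ (2 * x * cos (2 * x) - sin (2 * x)) * (1 - 2 * (b / a) - cos (2 * x)) :=
    mul_nonneg_of_nonpos_of_nonpos (sub_neg.2 (mul_cos_lt_sin hx₀ hxπ)).le (sub_nonpos.2 hcos)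
  have hsq : 0 < 2 * x * sin (2 * x) ^ 2 := by positivity
  rw [Fnl_eq_double_angle, deriv_Fnl]
  linarith [mul_pos (div_pos ha four_pos) (add_pos_of_nonneg_of_pos hconc hsq)]

theorem contDiff_Fnl (a b : ℝ) : ContDiff ℝ 1 (Fnl a b) := by
  unfold Fnl
  fun_prop

theorem deriv_Fnl_zero (ha : a ≠ 0) : deriv (Fnl a b) 0 = -b := by
  rw [deriv_Fnl, mul_zero, cos_zero, sin_zero]
  field_simp
  ring

theorem one_sub_two_mul_div_mem_Ioo (hb : 0 < b) (hab : b < a) :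
    1 - 2 * (b / a) ∈ Ioo (-1) 1 := by
  have hpos := div_pos hb (hb.trans hab)
  have hlt := (div_lt_one (hb.trans hab)).2 hab
  constructor <;> linarith

/-- The zero of `Fnl a b` in `(0, π / 2)`, for `0 < b < a`. -/
def fnlZero (a b : ℝ) : ℝ := arccos (1 - 2 * (b / a)) / 2

theorem two_mul_fnlZero (a b : ℝ) : 2 * fnlZero a b = arccos (1 - 2 * (b / a)) :=
  mul_div_cancel₀ _ two_ne_zero

theorem cos_two_mul_fnlZero (hb : 0 < b) (hab : b < a) :
    cos (2 * fnlZero a b) = 1 - 2 * (b / a) := by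
  have hc := one_sub_two_mul_div_mem_Ioo hb hab
  rw [two_mul_fnlZero, cos_arccos hc.1.le hc.2.le]

theorem fnlZero_nonneg (a b : ℝ) : 0 ≤ fnlZero a b := div_nonneg (arccos_nonneg _) zero_le_two

theorem fnlZero_lt_pi_div_two (hb : 0 < b) (hab : b < a) : fnlZero a b < π / 2 := by
  refine div_lt_div_of_pos_right ((arccos_le_pi _).lt_of_ne fun hπ => ?_) two_pos
  have hcos := cos_two_mul_fnlZero hb hab
  rw [two_mul_fnlZero, hπ, cos_pi] at hcos
  exact (one_sub_two_mul_div_mem_Ioo hb hab).1.ne hcos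

theorem lt_cos_two_mul (hb : 0 < b) (hab : b < a) {x : ℝ} (hx : x ∈ Ioo 0 (fnlZero a b)) :
    1 - 2 * (b / a) < cos (2 * x) := by
  rw [← cos_two_mul_fnlZero hb hab]
  have := fnlZero_lt_pi_div_two hb hab
  exact cos_lt_cos_of_nonneg_of_le_pi (by linarith [hx.1]) (by linarith) (by linarith [hx.2])

theorem cos_two_mul_lt (hb : 0 < b) (hab : b < a) {x : ℝ} (hx : x ∈ Ioo (fnlZero a b) (π / 2)) :
    cos (2 * x) < 1 - 2 * (b / a) := by
  rw [← cos_two_mul_fnlZero hb hab]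
  have := fnlZero_nonneg a b
  exact cos_lt_cos_of_nonneg_of_le_pi (by linarith) (by linarith [hx.2]) (by linarith [hx.1])

theorem strictAntiOn_mul_deriv_div_Fnl (hb : 0 < b) (hab : b < a) :
    StrictAntiOn (fun x => x * deriv (Fnl a b) x / Fnl a b x) (Ioo (fnlZero a b) (π / 2)) := by
  have hdouble : ∀ x ∈ Ioo (fnlZero a b) (π / 2), 2 * x ∈ Ioo (arccos (1 - 2 * (b / a))) π :=
    fun x hx => by
      rw [← two_mul_fnlZero]
      constructor <;> linarith [hx.1, hx.2]
  intro x hx x' hx' hlt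
  simp only [mul_deriv_div_Fnl (hb.trans hab).ne' (sub_pos.2 (cos_two_mul_lt hb hab hx)).ne',
    mul_deriv_div_Fnl (hb.trans hab).ne' (sub_pos.2 (cos_two_mul_lt hb hab hx')).ne']
  exact strictAntiOn_mul_cot_add (one_sub_two_mul_div_mem_Ioo hb hab) (hdouble x hx)
    (hdouble x' hx') (mul_lt_mul_of_pos_left hlt two_pos)

theorem isScalarFieldNonlinearity_Fnl (hb : 0 < b) (hab : b < a) :
    IsScalarFieldNonlinearity (Fnl a b) (fnlZero a b) (π / 2) := by
  have ha : 0 < a := hb.trans hab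
  have hθ := fnlZero_lt_pi_div_two hb hab
  refine
    { contDiff := contDiff_Fnl a b
      map_zero := by simp [Fnl]
      deriv_zero_neg := by rwa [deriv_Fnl_zero ha.ne', neg_lt_zero]
      map_theta := by simp [Fnl_eq_double_angle, cos_two_mul_fnlZero hb hab]
      neg := fun x hx => ?_
      lt_mul_deriv := fun x hx => Fnl_lt_mul_deriv ha ⟨hx.1, hx.2.trans_lt hθ⟩ ?_
      pos := fun x hx => ?_
      strictAntiOn_index := strictAntiOn_mul_deriv_div_Fnl hb hab }
  · rw [Fnl_eq_double_angle]
    exact mul_neg_of_pos_of_neg (by positivity) (mul_neg_of_pos_of_neg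
      (sin_two_mul_pos ⟨hx.1, hx.2.trans hθ⟩) (sub_neg.2 (lt_cos_two_mul hb hab hx)))
  · rcases hx.2.eq_or_lt with rfl | hxθ
    · exact (cos_two_mul_fnlZero hb hab).ge
    · exact (lt_cos_two_mul hb hab ⟨hx.1, hxθ⟩).le
  · rw [Fnl_eq_double_angle]
    exact mul_pos (by positivity) (mul_pos (sin_two_mul_pos ⟨(fnlZero_nonneg a b).trans_lt hx.1,
      hx.2⟩) (sub_pos.2 (cos_two_mul_lt hb hab hx)))

end Fnl

theorem radialLaplacian_of_add_eq_zero {n : ℕ} {f : ℝ → ℝ} {r q : ℝ}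
    (h : deriv (deriv f) r + (((n + 2 : ℕ) : ℝ) - 1) / r * deriv f r + q = 0) :
    radialLaplacian n f r = -q := by
  rw [radialLaplacian, eq_neg_iff_add_eq_zero, ← h]
  push_cast
  ring

theorem isRadialGroundState_of_mem_Szero {n : ℕ} {a b y : ℝ} {u : ℝ → ℝ → ℝ}
    (hfam : IsShootingFamily (n + 2) a b u) (hy : y ∈ Szero u) :
    IsRadialGroundState n (Fnl a b) (π / 2) (u y) := by
  obtain ⟨hyM, hpos, hlim⟩ := hy
  obtain ⟨⟨hu, hu₀, hode⟩, huy⟩ := hfam y hyM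
  exact
    { contDiff := hu
      radialLaplacian_eq := fun r hr => radialLaplacian_of_add_eq_zero (hode r hr)
      deriv_zero := hu₀
      map_zero_lt := huy.trans_lt hyM.2
      pos := hpos
      tendsto_zero := hlim }

theorem IsLinearizedSol.isRadialLinearization {n : ℕ} {a b : ℝ} {w v : ℝ → ℝ}
    (hv : IsLinearizedSol (n + 2) a b w v) : IsRadialLinearization n (Fnl a b) w v := by
  obtain ⟨hsmooth, -, -, hode⟩ := hv
  refine ⟨hsmooth, fun r hr => ?_⟩
  rw [radialLaplacian_of_add_eq_zero (hode r hr), neg_mul]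

theorem linearized_solution_diverges (d : ℕ) (hd : 2 ≤ d) (a b : ℝ)
    (hb : 0 < b) (hab : 2 * b < a)
    (u : ℝ → ℝ → ℝ) (hfam : IsShootingFamily d a b u)
    (y : ℝ) (hy : y ∈ Szero u)
    (v : ℝ → ℝ) (hv : IsLinearizedSol d a b (u y) v) :
    Tendsto v atTop atBot ∧ Tendsto (deriv v) atTop atBot ∧
    ∃ c > (0 : ℝ), ∃ ε > (0 : ℝ), ∀ᶠ r in atTop,
      v r ≤ -c * Real.exp (ε * r) ∧ deriv v r ≤ -c * Real.exp (ε * r) := by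
  obtain ⟨n, rfl⟩ := Nat.exists_eq_add_of_le' hd
  have hv₀ : 0 < v 0 := one_pos.trans_eq hv.2.1.symm
  exact linearized_solution_diverges_general (isScalarFieldNonlinearity_Fnl hb (by linarith))
    (isRadialGroundState_of_mem_Szero hfam hy) hv.isRadialLinearization hv₀
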